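/- Under the continuous quadrature setup, let λ > 0, penalty parameters μ₁,…,μ_d > 0 and filter values h₁,…,h_d ∈ [0,1] be given, and let f and f^ε be bounded measurable real-valued functions on Ω (f^ε a noisy version of f). Then the hybrid hyperinterpolant of the noisy function satisfies ‖Hf^ε − f‖₂ ≤ ‖Hf^ε − ℒf^ε‖₂ + 2·V^{1/2}·E(f) + V^{1/2}·‖f^ε − f‖_∞, where E(f) = inf{ ‖f − p‖_∞ : p ∈ span{Φ₁,…,Φ_d} }. -/

import Mathlib

/-!
The discrete orthonormality makes `ℒ` fix every `p` in the span of the `Φ ℓ`, so for any such `p`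
`Hf^ε − f = (Hf^ε − ℒf^ε) + ℒ(f^ε − p) + (p − f)`.
The last term has `L²` norm at most `V^{1/2} ‖f − p‖_∞`. For the middle one, Bessel's inequality
for the discrete inner product (`discrete_bessel`) and Parseval's identity for the continuous one
(`integral_sq_span`) give `‖ℒg‖₂² = ∑ α_ℓ(g)² ≤ ∑ w_j g(x_j)² ≤ V ‖g‖_∞²`, and
`‖f^ε − p‖_∞ ≤ ‖f^ε − f‖_∞ + ‖f − p‖_∞`. Minkowski's inequality and the infimum over `p` finish.
-/

open Finset MeasureTheory

/-- The soft thresholding operator `S_k(a) = max(0, a−k) + min(0, a+k)`. -/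
def softThreshold (k a : ℝ) : ℝ := max 0 (a - k) + min 0 (a + k)

/-- The `L²` norm of a square-integrable function, as the square root of an integral. -/
lemma sqrt_integral_sq_eq_norm {Ω : Type*} [MeasurableSpace Ω] {ω : Measure Ω} {F : Ω → ℝ}
    (hF : MemLp F 2 ω) : Real.sqrt (∫ y, F y ^ 2 ∂ω) = ‖hF.toLp F‖ := by
  rw [← Real.sqrt_sq (norm_nonneg (hF.toLp F)), ← real_inner_self_eq_norm_sq, L2.inner_def]
  congr 1
  apply integral_congr_ae
  filter_upwards [hF.coeFn_toLp] with y hy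
  simp [hy]

/-- Minkowski's inequality in `L²`. -/
lemma sqrt_integral_sq_add_le {Ω : Type*} [MeasurableSpace Ω] {ω : Measure Ω} {F G : Ω → ℝ}
    (hF : MemLp F 2 ω) (hG : MemLp G 2 ω) :
    Real.sqrt (∫ y, (F y + G y) ^ 2 ∂ω)
      ≤ Real.sqrt (∫ y, F y ^ 2 ∂ω) + Real.sqrt (∫ y, G y ^ 2 ∂ω) := by
  have h := sqrt_integral_sq_eq_norm (hF.add hG)
  simp only [Pi.add_apply] at h
  rw [h, sqrt_integral_sq_eq_norm hF, sqrt_integral_sq_eq_norm hG, MemLp.toLp_add]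
  exact norm_add_le _ _

/-- Parseval's identity on the span of an orthonormal family. -/
lemma integral_sq_span {Ω : Type*} [MeasurableSpace Ω] {ω : Measure Ω} {d : ℕ}
    {Φ : Fin d → Ω → ℝ} (hΦ : ∀ ℓ, MemLp (Φ ℓ) 2 ω)
    (horth : ∀ i k : Fin d, ∫ x, Φ i x * Φ k x ∂ω = if i = k then 1 else 0)
    (b : Fin d → ℝ) : ∫ y, (∑ ℓ, b ℓ * Φ ℓ y) ^ 2 ∂ω = ∑ ℓ, b ℓ ^ 2 := by
  have hint : ∀ i k, Integrable (fun y => b i * b k * (Φ i y * Φ k y)) ω := fun i k =>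
    ((hΦ i).integrable_mul (hΦ k)).const_mul _
  have hexp : ∀ y, (∑ ℓ, b ℓ * Φ ℓ y) ^ 2 = ∑ i, ∑ k, b i * b k * (Φ i y * Φ k y) := by
    intro y
    rw [sq, Finset.sum_mul_sum]
    exact Finset.sum_congr rfl fun i _ => Finset.sum_congr rfl fun k _ => by ring
  simp_rw [hexp]
  rw [integral_finsetSum _ fun i _ => integrable_finsetSum _ fun k _ => hint i k]
  refine Finset.sum_congr rfl fun i _ => ?_
  rw [integral_finsetSum _ fun k _ => hint i k]
  simp_rw [integral_const_mul, horth]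
  simp [sq]

/-- Bessel's inequality for the discrete inner product `∑ j, w j * g j * h j`. -/
lemma discrete_bessel {d N : ℕ} {P : Fin d → Fin N → ℝ} {w : Fin N → ℝ} (hw : ∀ j, 0 < w j)
    (hdorth : ∀ i k : Fin d, ∑ j, w j * P i j * P k j = if i = k then 1 else 0)
    (g : Fin N → ℝ) (b : Fin d → ℝ) (hb : ∀ ℓ, b ℓ = ∑ j, w j * g j * P ℓ j) :
    ∑ ℓ, b ℓ ^ 2 ≤ ∑ j, w j * g j ^ 2 := by
  have h0 : 0 ≤ ∑ j, w j * (g j - ∑ ℓ, b ℓ * P ℓ j) ^ 2 :=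
    Finset.sum_nonneg fun j _ => mul_nonneg (hw j).le (sq_nonneg _)
  have h1 : ∑ j, w j * g j * ∑ ℓ, b ℓ * P ℓ j = ∑ ℓ, b ℓ ^ 2 := by
    simp_rw [Finset.mul_sum]
    rw [Finset.sum_comm]
    refine Finset.sum_congr rfl fun ℓ _ => ?_
    rw [sq]
    nth_rewrite 3 [hb ℓ]
    rw [Finset.mul_sum]
    exact Finset.sum_congr rfl fun j _ => by ring
  have h2 : ∑ j, w j * (∑ ℓ, b ℓ * P ℓ j) ^ 2 = ∑ ℓ, b ℓ ^ 2 := by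
    have : ∀ j, w j * (∑ ℓ, b ℓ * P ℓ j) ^ 2
        = ∑ i, ∑ k, b i * b k * (w j * P i j * P k j) := by
      intro j
      rw [sq, Finset.sum_mul_sum, Finset.mul_sum]
      refine Finset.sum_congr rfl fun i _ => ?_
      rw [Finset.mul_sum]
      exact Finset.sum_congr rfl fun k _ => by ring
    simp_rw [this]
    rw [Finset.sum_comm]
    refine Finset.sum_congr rfl fun i _ => ?_
    rw [Finset.sum_comm]
    simp_rw [← Finset.mul_sum, hdorth]
    simp [sq]
  have h3 : ∑ j, w j * (g j - ∑ ℓ, b ℓ * P ℓ j) ^ 2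
      = ∑ j, w j * g j ^ 2 - 2 * (∑ j, w j * g j * ∑ ℓ, b ℓ * P ℓ j)
        + ∑ j, w j * (∑ ℓ, b ℓ * P ℓ j) ^ 2 := by
    rw [Finset.mul_sum, ← Finset.sum_sub_distrib, ← Finset.sum_add_distrib]
    exact Finset.sum_congr rfl fun j _ => by ring
  linarith

/-- error of hybrid hyperinterpolation of a noisy function:
`‖Hf^ε − f‖₂ ≤ ‖Hf^ε − ℒf^ε‖₂ + 2·V^{1/2}·E(f) + V^{1/2}·‖f^ε − f‖_∞`. -/
theorem hybrid_hyperinterpolation_noisy_error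
    {Ω : Type*} [MeasurableSpace Ω] [Nonempty Ω]
    (ω : Measure Ω) [IsFiniteMeasure ω]
    (V : ℝ) (hV : V = (ω Set.univ).toReal)
    (d N : ℕ) (hd : 0 < d) (hN : 0 < N)
    (Φ : Fin d → Ω → ℝ)
    (hΦmeas : ∀ ℓ, Measurable (Φ ℓ))
    (hΦbdd : ∀ ℓ, ∃ C : ℝ, ∀ x, |Φ ℓ x| ≤ C)
    (horth : ∀ i k : Fin d, ∫ x, Φ i x * Φ k x ∂ω = if i = k then 1 else 0)
    (x : Fin N → Ω) (w : Fin N → ℝ) (hw : ∀ j, 0 < w j)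
    (hwV : ∑ j, w j = V)
    (hdorth : ∀ i k : Fin d,
      ∑ j, w j * Φ i (x j) * Φ k (x j) = if i = k then 1 else 0)
    (lam : ℝ) (hlam : 0 < lam)
    (μ : Fin d → ℝ) (hμ : ∀ ℓ, 0 < μ ℓ)
    (h : Fin d → ℝ) (hh : ∀ ℓ, h ℓ ∈ Set.Icc (0 : ℝ) 1)
    (f fε : Ω → ℝ)
    (hf : Measurable f) (hfb : ∃ C : ℝ, ∀ y, |f y| ≤ C)
    (hfε : Measurable fε) (hfεb : ∃ C : ℝ, ∀ y, |fε y| ≤ C)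
    (α : Fin d → ℝ) (hα : ∀ ℓ, α ℓ = ∑ j, w j * fε (x j) * Φ ℓ (x j)) :
    Real.sqrt (∫ y,
        ((∑ ℓ, h ℓ * softThreshold (lam * μ ℓ) (α ℓ) * Φ ℓ y) - f y) ^ 2 ∂ω)
      ≤ Real.sqrt (∫ y,
          ((∑ ℓ, h ℓ * softThreshold (lam * μ ℓ) (α ℓ) * Φ ℓ y)
            - ∑ ℓ, α ℓ * Φ ℓ y) ^ 2 ∂ω)
        + 2 * Real.sqrt V *
          sInf {r : ℝ | ∃ c : Fin d → ℝ, r = ⨆ y, |f y - ∑ ℓ, c ℓ * Φ ℓ y|}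
        + Real.sqrt V * (⨆ y, |fε y - f y|) := by
  have hVpos : 0 < V := by
    rw [← hwV]
    exact Finset.sum_pos (fun j _ => hw j) ⟨⟨0, hN⟩, Finset.mem_univ _⟩
  have hsV : 0 < Real.sqrt V := Real.sqrt_pos.2 hVpos
  have hΦL : ∀ ℓ, MemLp (Φ ℓ) 2 ω := fun ℓ => by
    obtain ⟨C, hC⟩ := hΦbdd ℓ
    exact MemLp.of_bound (hΦmeas ℓ).aestronglyMeasurable C (ae_of_all _ hC)
  have hspan : ∀ b : Fin d → ℝ, MemLp (fun y => ∑ ℓ, b ℓ * Φ ℓ y) 2 ω := fun b =>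
    memLp_finsetSum _ fun ℓ _ => (hΦL ℓ).const_mul _
  obtain ⟨Cf, hCf⟩ := hfb
  obtain ⟨Ce, hCe⟩ := hfεb
  have hfL : MemLp f 2 ω := MemLp.of_bound hf.aestronglyMeasurable Cf (ae_of_all _ hCf)
  set A := ⨆ y, |fε y - f y| with hA
  -- Boundedness keeps the suprema from being the junk value `0`.
  have hAle : ∀ y, |fε y - f y| ≤ A := by
    refine le_ciSup (f := fun y => |fε y - f y|) ⟨Ce + Cf, ?_⟩
    rintro _ ⟨y, rfl⟩
    exact (abs_sub _ _).trans (add_le_add (hCe y) (hCf y))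
  set H : Ω → ℝ := fun y => ∑ ℓ, h ℓ * softThreshold (lam * μ ℓ) (α ℓ) * Φ ℓ y with hH
  have hHL : MemLp H 2 ω := hspan fun ℓ => h ℓ * softThreshold (lam * μ ℓ) (α ℓ)
  have key : ∀ c : Fin d → ℝ, Real.sqrt (∫ y, (H y - f y) ^ 2 ∂ω)
      ≤ Real.sqrt (∫ y, (H y - ∑ ℓ, α ℓ * Φ ℓ y) ^ 2 ∂ω)
        + 2 * Real.sqrt V * (⨆ y, |f y - ∑ ℓ, c ℓ * Φ ℓ y|) + Real.sqrt V * A := by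
    intro c
    set B := ⨆ y, |f y - ∑ ℓ, c ℓ * Φ ℓ y| with hB
    have hBle : ∀ y, |f y - ∑ ℓ, c ℓ * Φ ℓ y| ≤ B := by
      choose C hC using hΦbdd
      refine le_ciSup (f := fun y => |f y - ∑ ℓ, c ℓ * Φ ℓ y|) ⟨Cf + ∑ ℓ, |c ℓ| * C ℓ, ?_⟩
      rintro _ ⟨y, rfl⟩
      refine (abs_sub _ _).trans (add_le_add (hCf y) ?_)
      refine (Finset.abs_sum_le_sum_abs _ _).trans (Finset.sum_le_sum fun ℓ _ => ?_)
      rw [abs_mul]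
      exact mul_le_mul_of_nonneg_left (hC ℓ y) (abs_nonneg _)
    obtain ⟨y₀⟩ := ‹Nonempty Ω›
    have hA0 : 0 ≤ A := (abs_nonneg _).trans (hAle y₀)
    have hB0 : 0 ≤ B := (abs_nonneg _).trans (hBle y₀)
    have hpf : MemLp (fun y => (∑ ℓ, c ℓ * Φ ℓ y) - f y) 2 ω := (hspan c).sub hfL
    -- `∑ (α ℓ - c ℓ) Φ ℓ` is the hyperinterpolant of `fε - p`, where `p = ∑ c ℓ Φ ℓ`.
    have hmid : Real.sqrt (∫ y, (∑ ℓ, (α ℓ - c ℓ) * Φ ℓ y) ^ 2 ∂ω)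
        ≤ Real.sqrt V * (A + B) := by
      have hcoef : ∀ ℓ, α ℓ - c ℓ
          = ∑ j, w j * (fε (x j) - ∑ k, c k * Φ k (x j)) * Φ ℓ (x j) := by
        intro ℓ
        have hc : ∑ j, w j * (∑ k, c k * Φ k (x j)) * Φ ℓ (x j) = c ℓ := by
          have : ∀ j, w j * (∑ k, c k * Φ k (x j)) * Φ ℓ (x j)
              = ∑ k, c k * (w j * Φ k (x j) * Φ ℓ (x j)) := by
            intro j
            rw [Finset.mul_sum, Finset.sum_mul]
            exact Finset.sum_congr rfl fun k _ => by ring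
          simp_rw [this]
          rw [Finset.sum_comm]
          simp_rw [← Finset.mul_sum, hdorth]
          simp
        simp_rw [mul_sub, sub_mul]
        rw [Finset.sum_sub_distrib, hc, hα ℓ]
      have hbes := discrete_bessel (P := fun ℓ j => Φ ℓ (x j)) hw hdorth
        (fun j => fε (x j) - ∑ k, c k * Φ k (x j)) (fun ℓ => α ℓ - c ℓ) hcoef
      rw [integral_sq_span hΦL horth]
      apply Real.sqrt_le_iff.2
      refine ⟨by positivity, hbes.trans ?_⟩
      rw [mul_pow, Real.sq_sqrt hVpos.le, ← hwV, Finset.sum_mul]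
      refine Finset.sum_le_sum fun j _ => mul_le_mul_of_nonneg_left ?_ (hw j).le
      refine sq_le_sq' ?_ ?_ <;>
        linarith [(abs_le.1 (hAle (x j))).1, (abs_le.1 (hBle (x j))).1,
          (abs_le.1 (hAle (x j))).2, (abs_le.1 (hBle (x j))).2]
    have hlast : Real.sqrt (∫ y, ((∑ ℓ, c ℓ * Φ ℓ y) - f y) ^ 2 ∂ω) ≤ Real.sqrt V * B := by
      apply Real.sqrt_le_iff.2
      refine ⟨by positivity, ?_⟩
      rw [mul_pow, Real.sq_sqrt hVpos.le, hV]
      calc ∫ y, ((∑ ℓ, c ℓ * Φ ℓ y) - f y) ^ 2 ∂ω ≤ ∫ _, B ^ 2 ∂ω := by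
            refine integral_mono hpf.integrable_sq (integrable_const _) fun y => ?_
            have := hBle y
            rw [abs_sub_comm] at this
            exact sq_le_sq.2 (this.trans (le_abs_self B))
        _ = _ := by simp [Measure.real]
    have t1 := sqrt_integral_sq_add_le (hHL.sub (hspan α))
      ((hspan fun ℓ => α ℓ - c ℓ).add hpf)
    have t2 := sqrt_integral_sq_add_le (hspan fun ℓ => α ℓ - c ℓ) hpf
    simp only [Pi.add_apply, Pi.sub_apply] at t1
    have e : ∀ y, H y - f y = (H y - ∑ ℓ, α ℓ * Φ ℓ y)
        + ((∑ ℓ, (α ℓ - c ℓ) * Φ ℓ y) + ((∑ ℓ, c ℓ * Φ ℓ y) - f y)) := by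
      intro y
      simp_rw [sub_mul]
      rw [Finset.sum_sub_distrib]
      ring
    simp_rw [← e] at t1
    linarith
  have hinf : (Real.sqrt (∫ y, (H y - f y) ^ 2 ∂ω)
      - Real.sqrt (∫ y, (H y - ∑ ℓ, α ℓ * Φ ℓ y) ^ 2 ∂ω) - Real.sqrt V * A) / (2 * Real.sqrt V)
      ≤ sInf {r : ℝ | ∃ c : Fin d → ℝ, r = ⨆ y, |f y - ∑ ℓ, c ℓ * Φ ℓ y|} := by
    refine le_csInf ⟨_, 0, rfl⟩ ?_
    rintro _ ⟨c, rfl⟩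
    rw [div_le_iff₀' (by positivity)]
    linarith [key c]
  rw [div_le_iff₀' (by positivity)] at hinf
  linarith
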